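/- Let k be a field and A a commutative k-bialgebra. Let S₁ and S₂ be Hopf subalgebras of A, and let S₁·S₂ denote the k-linear span of all products s₁s₂ with s₁ ∈ S₁ and s₂ ∈ S₂ (equivalently, the image of the multiplication map S₁ ⊗_k S₂ → A). Then S₁·S₂ is a k-subalgebra of A and is a Hopf subalgebra of A containing both S₁ and S₂. Consequently, the set of Hopf subalgebras of A is directed under inclusion, and the union of all Hopf subalgebras of A is itself a Hopf subalgebra of A, the largest one. -/

import Mathlib

open TensorProduct

/-- A Hopf subalgebra of a `k`-bialgebra `A`: a subalgebra `S` such that the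
comultiplication of `A` restricts to `S` (i.e. `Δ` maps `S` into the image of
`S ⊗ S → A ⊗ A`, witnessed by a lift `comulS`), and such that there is a `k`-linear
antipode `σ : S → S` satisfying the antipode identities
`m ∘ (σ ⊗ id) ∘ Δ = η ∘ ε = m ∘ (id ⊗ σ) ∘ Δ` on `S`. -/
def IsHopfSubalgebra {k A : Type*} [CommRing k] [Ring A] [Bialgebra k A]
    (S : Subalgebra k A) : Prop :=
  ∃ (comulS : S →ₗ[k] S ⊗[k] S) (σ : S →ₗ[k] S),
    (∀ s : S, TensorProduct.map S.val.toLinearMap S.val.toLinearMap (comulS s)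
        = Coalgebra.comul (R := k) (s : A)) ∧
    (∀ s : S, LinearMap.mul' k S (TensorProduct.map σ LinearMap.id (comulS s))
        = algebraMap k S (Coalgebra.counit (R := k) (s : A))) ∧
    (∀ s : S, LinearMap.mul' k S (TensorProduct.map LinearMap.id σ (comulS s))
        = algebraMap k S (Coalgebra.counit (R := k) (s : A)))


/-- separation by functionals on the second factor -/
theorem hsp_sep {k C : Type*} [Field k] [AddCommGroup C] [Module k C] (t u : C ⊗[k] C)
    (h : ∀ φ : C →ₗ[k] k, TensorProduct.rid k C (φ.lTensor C t) =
      TensorProduct.rid k C (φ.lTensor C u)) : t = u := by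
  classical
  let b := Module.Basis.ofVectorSpace k C
  apply (TensorProduct.equivFinsuppOfBasisRight (M := C) b).injective
  ext i
  rw [TensorProduct.equivFinsuppOfBasisRight_apply, TensorProduct.equivFinsuppOfBasisRight_apply]
  exact h (b.coord i)

/-- `(id ⊗ φ) Δ`. -/
noncomputable def hspL {k C : Type*} [Field k] [AddCommGroup C] [Module k C] [Coalgebra k C]
    (φ : C →ₗ[k] k) : C →ₗ[k] C :=
  (TensorProduct.rid k C).toLinearMap ∘ₗ φ.lTensor C ∘ₗ Coalgebra.comul

theorem hspL_comp {k C : Type*} [Field k] [AddCommGroup C] [Module k C] [Coalgebra k C]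
    (φ ψ : C →ₗ[k] k) (x : C) :
    hspL φ (hspL ψ x) =
      hspL (LinearMap.mul' k k ∘ₗ TensorProduct.map φ ψ ∘ₗ Coalgebra.comul) x := by
  have h1 : ∀ t : C ⊗[k] C, hspL φ (TensorProduct.rid k C (ψ.lTensor C t)) =
      TensorProduct.rid k C ((LinearMap.mul' k k ∘ₗ TensorProduct.map φ ψ).lTensor C
        (TensorProduct.assoc k C C C (Coalgebra.comul.rTensor C t))) := by
    intro t
    induction t with
    | zero => simp
    | add a b ha hb => simp only [map_add, ha, hb]
    | tmul a b =>
      have h2 : ∀ s : C ⊗[k] C, ψ b • TensorProduct.rid k C (φ.lTensor C s) =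
        TensorProduct.rid k C ((LinearMap.mul' k k ∘ₗ TensorProduct.map φ ψ).lTensor C
        (TensorProduct.assoc k C C C (s ⊗ₜ b))) := by
        intro s
        induction s with
        | zero => simp
        | add a b ha hb => simp only [map_add, smul_add, ha, hb, TensorProduct.add_tmul]
        | tmul c d => simp [smul_smul, mul_comm]
      simpa [hspL] using h2 (Coalgebra.comul a)
  have := h1 (Coalgebra.comul x)
  rw [Coalgebra.coassoc_apply] at this
  simp only [hspL, LinearMap.comp_apply, LinearEquiv.coe_coe] at this ⊢
  rw [this]
  rw [← LinearMap.comp_apply (LinearMap.lTensor _ _), ← LinearMap.lTensor_comp]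
  rfl

theorem hsp_finite {k C : Type*} [Field k] [AddCommGroup C] [Module k C] (t : C ⊗[k] C) :
    ∃ W : Submodule k C, FiniteDimensional k W ∧
      ∀ φ : C →ₗ[k] k, TensorProduct.rid k C (φ.lTensor C t) ∈ W := by
  induction t with
  | zero => exact ⟨⊥, inferInstance, by simp⟩
  | tmul a b =>
    refine ⟨k ∙ a, inferInstance, fun φ => ?_⟩
    simpa using Submodule.smul_mem _ _ (Submodule.mem_span_singleton_self a)
  | add a b ha hb =>
    obtain ⟨W, _, hW⟩ := ha
    obtain ⟨W', _, hW'⟩ := hb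
    refine ⟨W ⊔ W', inferInstance, fun φ => ?_⟩
    simp only [map_add]
    exact Submodule.add_mem_sup (hW φ) (hW' φ)

/-- Every element of a coalgebra is a matrix coefficient combination. -/
theorem hsp_coeff {k C : Type*} [Field k] [AddCommGroup C] [Module k C] [Coalgebra k C] (x : C) :
    ∃ (n : ℕ) (a : Matrix (Fin n) (Fin n) C) (μ : Matrix (Fin n) (Fin n) k),
      (∀ i j, Coalgebra.comul (R := k) (a i j) = ∑ l, a i l ⊗ₜ[k] a l j) ∧
      (∀ i j, Coalgebra.counit (R := k) (a i j) = (1 : Matrix (Fin n) (Fin n) k) i j) ∧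
      x = ∑ i, ∑ j, μ i j • a i j := by
  classical
  let ev : (C →ₗ[k] k) →ₗ[k] C :=
    { toFun := fun φ => hspL φ x
      map_add' := by intro φ ψ; simp [hspL, LinearMap.lTensor_add]
      map_smul' := by intro r φ; simp [hspL, LinearMap.lTensor_smul] }
  let V : Submodule k C := LinearMap.range ev
  have hxV : x ∈ V := ⟨Coalgebra.counit, by simp [ev, hspL]⟩
  have hVst : ∀ (φ : C →ₗ[k] k), ∀ v ∈ V, hspL φ v ∈ V := by
    rintro φ _ ⟨ψ, rfl⟩
    exact ⟨_, (hspL_comp φ ψ x).symm⟩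
  have : FiniteDimensional k V := by
    obtain ⟨W, _, hW⟩ := hsp_finite (k := k) (Coalgebra.comul (R := k) x)
    refine Submodule.finiteDimensional_of_le (S₂ := W) ?_
    rintro _ ⟨ψ, rfl⟩
    exact hW ψ
  let b := Module.finBasis k V
  obtain ⟨π, hπ⟩ := V.subtype.exists_leftInverse_of_injective V.ker_subtype
  have hπ' : ∀ v : V, π (v : C) = v := fun v => LinearMap.congr_fun hπ v
  let w : Fin (Module.finrank k V) → (C →ₗ[k] k) := fun i => b.coord i ∘ₗ π
  have hw : ∀ v ∈ V, v = ∑ i, w i v • (b i : C) := by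
    intro v hv
    have := b.sum_repr ⟨v, hv⟩
    have h2 := congrArg (Subtype.val) this
    simp only [w, LinearMap.comp_apply, hπ' ⟨v, hv⟩, Module.Basis.coord_apply]
    rw [AddSubmonoidClass.coe_finsetSum] at h2
    exact h2.symm
  have hwb : ∀ i j, w i (b j) = (1 : Matrix _ _ k) i j := by
    intro i j
    simp [w, hπ', Matrix.one_apply, Finsupp.single_apply, eq_comm]
  let a : Matrix (Fin (Module.finrank k V)) (Fin (Module.finrank k V)) C := fun i j =>
    TensorProduct.lid k C ((w i).rTensor C (Coalgebra.comul (b j : C)))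
  have hsw : ∀ (φ ψ : C →ₗ[k] k) (t : C ⊗[k] C),
      ψ (TensorProduct.rid k C (φ.lTensor C t)) = φ (TensorProduct.lid k C (ψ.rTensor C t)) := by
    intro φ ψ t
    induction t with
    | zero => simp
    | add a b ha hb => simp only [map_add, ha, hb]
    | tmul a b => simp [mul_comm]
  have hΔ : ∀ j, Coalgebra.comul (R := k) (b j : C) = ∑ i, (b i : C) ⊗ₜ[k] a i j := by
    intro j
    apply hsp_sep
    intro φ
    have h1 := hw _ (hVst φ (b j) (b j).2)
    have h2 : TensorProduct.rid k C (φ.lTensor C (Coalgebra.comul (b j : C))) = hspL φ (b j) := rfl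
    rw [h2, h1]
    simp only [map_sum, LinearMap.lTensor_tmul, TensorProduct.rid_tmul]
    refine Finset.sum_congr rfl fun i _ => ?_
    congr 1
    exact hsw φ (w i) _
  refine ⟨_, a, fun i j => Coalgebra.counit (R := k) (b i : C) * w j x, ?_, ?_, ?_⟩
  · intro i j
    have h1 : ∀ t : C ⊗[k] C, Coalgebra.comul (R := k) (TensorProduct.lid k C ((w i).rTensor C t)) =
      TensorProduct.lid k (C ⊗[k] C) ((w i).rTensor (C ⊗[k] C) (Coalgebra.comul.lTensor C t)) := by
      intro t
      induction t with
      | zero => simp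
      | add a b ha hb => simp only [map_add, ha, hb]
      | tmul a b => simp
    have h3 : ∀ (t : C ⊗[k] C) (c : C), TensorProduct.lid k (C ⊗[k] C) ((w i).rTensor (C ⊗[k] C)
        (TensorProduct.assoc k C C C (t ⊗ₜ c))) =
        (TensorProduct.lid k C ((w i).rTensor C t)) ⊗ₜ c := by
      intro t c
      induction t with
      | zero => simp
      | add a b ha hb => simp only [map_add, ha, hb, TensorProduct.add_tmul]
      | tmul a b => simp [TensorProduct.smul_tmul']
    have h2 : Coalgebra.comul (R := k) (a i j) = _ := h1 (Coalgebra.comul (b j : C))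
    rw [← Coalgebra.coassoc_apply, hΔ j] at h2
    simp only [map_sum, LinearMap.rTensor_tmul, h3] at h2
    exact h2
  · intro i j
    have := hsw Coalgebra.counit (w i) (Coalgebra.comul (b j : C))
    rw [← hwb]
    simp only [a]
    rw [← this]
    simp
  · have h1 : ∀ j, (b j : C) = ∑ i, Coalgebra.counit (R := k) (b i : C) • a i j := by
      intro j
      have := congrArg (fun t => TensorProduct.lid k C (Coalgebra.counit.rTensor C t)) (hΔ j)
      simpa using this
    conv_lhs => rw [hw x hxV]
    rw [Finset.sum_comm]
    refine Finset.sum_congr rfl fun j _ => ?_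
    conv_lhs => rw [h1 j]
    rw [Finset.smul_sum]
    refine Finset.sum_congr rfl fun i _ => ?_
    rw [smul_smul, mul_comm]

/-- A comatrix with entries in `S`, together with its inverse, also in `S`. -/
structure HspMat {k A : Type*} [Field k] [CommRing A] [Bialgebra k A] (S : Subalgebra k A)
    {ι : Type} [Fintype ι] [DecidableEq ι] (a c : Matrix ι ι A) : Prop where
  memA : ∀ i j, a i j ∈ S
  memC : ∀ i j, c i j ∈ S
  comul : ∀ i j, Coalgebra.comul (R := k) (a i j) = ∑ l, a i l ⊗ₜ[k] a l j
  counit : ∀ i j, Coalgebra.counit (R := k) (a i j) = (1 : Matrix ι ι k) i j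
  inv : a * c = 1

/-- `y` is the antipode of `x`, as witnessed by a comatrix. -/
def HspRel {k A : Type*} [Field k] [CommRing A] [Bialgebra k A] (S : Subalgebra k A)
    (x y : A) : Prop :=
  ∃ (ι : Type) (_ : Fintype ι) (_ : DecidableEq ι) (a c : Matrix ι ι A) (μ : Matrix ι ι k),
    HspMat S a c ∧ x = ∑ i, ∑ j, μ i j • a i j ∧ y = ∑ i, ∑ j, μ i j • c i j

section
variable {k A : Type*} [Field k] [CommRing A] [Bialgebra k A]

theorem HspRel.mono {S T : Subalgebra k A} (h : S ≤ T) {x y : A} (r : HspRel S x y) :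
    HspRel T x y := by
  obtain ⟨ι, _, _, a, c, μ, H, hx, hy⟩ := r
  exact ⟨ι, _, _, a, c, μ, ⟨fun i j => h (H.memA i j), fun i j => h (H.memC i j), H.comul,
    H.counit, H.inv⟩, hx, hy⟩

theorem HspRel.smul {S : Subalgebra k A} (r : k) {x y : A} (h : HspRel S x y) :
    HspRel S (r • x) (r • y) := by
  obtain ⟨ι, _, _, a, c, μ, H, rfl, rfl⟩ := h
  refine ⟨ι, _, _, a, c, r • μ, H, ?_, ?_⟩ <;> simp [Finset.smul_sum, smul_smul]

theorem HspRel.add {S : Subalgebra k A} {x y x' y' : A} (h : HspRel S x y) (h' : HspRel S x' y') :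
    HspRel S (x + x') (y + y') := by
  obtain ⟨ι, _, _, a, c, μ, H, rfl, rfl⟩ := h
  obtain ⟨ι', _, _, a', c', μ', H', rfl, rfl⟩ := h'
  refine ⟨ι ⊕ ι', inferInstance, inferInstance, Matrix.fromBlocks a 0 0 a',
    Matrix.fromBlocks c 0 0 c', Matrix.fromBlocks μ 0 0 μ', ⟨?_, ?_, ?_, ?_, ?_⟩, ?_, ?_⟩
  · rintro (i | i) (j | j) <;> simp [H.memA, H'.memA]
  · rintro (i | i) (j | j) <;> simp [H.memC, H'.memC]
  · rintro (i | i) (j | j) <;> simp [H.comul, H'.comul]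
  · rintro (i | i) (j | j) <;> simp [H.counit, H'.counit, Matrix.one_apply]
  · simp [Matrix.fromBlocks_multiply, H.inv, H'.inv]
  · simp
  · simp

theorem HspRel.zero (S : Subalgebra k A) : HspRel S 0 0 :=
  ⟨Empty, inferInstance, inferInstance, 0, 0, 0, ⟨by simp, by simp, by simp, by simp,
    by ext i; exact i.elim⟩, by simp, by simp⟩

theorem HspRel.mul {S : Subalgebra k A} {x y x' y' : A} (h : HspRel S x y) (h' : HspRel S x' y') :
    HspRel S (x * x') (y * y') := by
  obtain ⟨ι, _, _, a, c, μ, H, rfl, rfl⟩ := h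
  obtain ⟨ι', _, _, a', c', μ', H', rfl, rfl⟩ := h'
  have key : ∀ (a : Matrix ι ι A) (a' : Matrix ι' ι' A),
      (∑ i, ∑ j, μ i j • a i j) * (∑ i, ∑ j, μ' i j • a' i j) =
      ∑ i : ι × ι', ∑ j : ι × ι', Matrix.kroneckerMap (· * ·) μ μ' i j •
        Matrix.kroneckerMap (· * ·) a a' i j := by
    intro a a'
    simp only [Fintype.sum_prod_type, Matrix.kroneckerMap_apply]
    rw [Finset.sum_mul_sum]
    refine Finset.sum_congr rfl fun i _ => Finset.sum_congr rfl fun i' _ => ?_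
    rw [Finset.sum_mul_sum]
    refine Finset.sum_congr rfl fun j _ => Finset.sum_congr rfl fun j' _ => ?_
    rw [smul_mul_smul_comm]
  refine ⟨ι × ι', inferInstance, inferInstance, Matrix.kroneckerMap (· * ·) a a',
    Matrix.kroneckerMap (· * ·) c c', Matrix.kroneckerMap (· * ·) μ μ', ⟨?_, ?_, ?_, ?_, ?_⟩,
    key _ _, key _ _⟩
  · exact fun i j => mul_mem (H.memA _ _) (H'.memA _ _)
  · exact fun i j => mul_mem (H.memC _ _) (H'.memC _ _)
  · rintro ⟨i, i'⟩ ⟨j, j'⟩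
    simp only [Fintype.sum_prod_type, Matrix.kroneckerMap_apply, Bialgebra.comul_mul, H.comul,
      H'.comul, Finset.sum_mul_sum, Algebra.TensorProduct.tmul_mul_tmul]
  · rintro ⟨i, i'⟩ ⟨j, j'⟩
    simp only [Matrix.kroneckerMap_apply, Bialgebra.counit_mul, H.counit, H'.counit,
      Matrix.one_apply, Prod.mk.injEq]
    split_ifs <;> simp_all
  · have := Matrix.mul_kronecker_mul a c a' c'
    rw [H.inv, H'.inv, Matrix.one_kronecker_one] at this
    exact this.symm

/-- iterated convolution power of the identity -/
noncomputable def hspPsi (k A : Type*) [Field k] [CommRing A] [Bialgebra k A] : ℕ → (A →ₗ[k] A)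
  | 0 => Algebra.linearMap k A ∘ₗ Coalgebra.counit
  | n + 1 => LinearMap.mul' k A ∘ₗ TensorProduct.map (hspPsi k A n) LinearMap.id ∘ₗ Coalgebra.comul

theorem hspPsi_apply {S : Subalgebra k A} {ι : Type} [Fintype ι] [DecidableEq ι]
    {a c : Matrix ι ι A} (H : HspMat S a c) (n : ℕ) (i j : ι) :
    hspPsi k A n (a i j) = (a ^ n) i j := by
  induction n generalizing i j with
  | zero =>
    simp only [hspPsi, LinearMap.comp_apply, H.counit, pow_zero, Matrix.one_apply]
    split_ifs <;> simp
  | succ n ih =>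
    simp [hspPsi, H.comul, ih, pow_succ, Matrix.mul_apply]

theorem HspRel.eq_zero {S : Subalgebra k A} {y : A} (h : HspRel S 0 y) : y = 0 := by
  obtain ⟨ι, _, _, a, c, μ, H, hx, rfl⟩ := h
  let l : Matrix ι ι A →ₗ[A] A :=
    { toFun := fun M => ∑ i, ∑ j, μ i j • M i j
      map_add' := by intro M N; simp [Finset.sum_add_distrib]
      map_smul' := by intro r M; simp [Finset.mul_sum] }
  have hpow : ∀ n, l (a ^ n) = 0 := by
    intro n
    have := congrArg (hspPsi k A n) hx
    simp only [map_sum, map_smul, hspPsi_apply H, map_zero] at this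
    exact this.symm
  have hpoly : ∀ p : Polynomial A, l (Polynomial.aeval a p) = 0 := by
    intro p
    rw [Polynomial.aeval_eq_sum_range]
    simp [map_sum, hpow]
  have hch := Matrix.aeval_self_charpoly a
  rw [← Polynomial.divX_mul_X_add a.charpoly] at hch
  simp only [map_add, map_mul, Polynomial.aeval_X, Polynomial.aeval_C] at hch
  have h2 := congrArg (· * c) hch
  simp only [add_mul, mul_assoc, H.inv, mul_one, zero_mul, ← Algebra.smul_def] at h2
  have h3 := congrArg l h2
  rw [map_add, hpoly, zero_add, map_smul, map_zero] at h3
  have hdet : a.det * c.det = 1 := by rw [← Matrix.det_mul, H.inv, Matrix.det_one]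
  change l c = 0
  rw [smul_eq_mul] at h3
  calc l c = (a.det * c.det) * l c := by rw [hdet, one_mul]
    _ = ((-1) ^ Fintype.card ι * c.det) * (a.charpoly.coeff 0 * l c) := by
      rw [Matrix.det_eq_sign_charpoly_coeff]; ring
    _ = 0 := by rw [h3, mul_zero]

theorem hsp_inj (S : Subalgebra k A) : Function.Injective
    (TensorProduct.map S.val.toLinearMap S.val.toLinearMap) :=
  TensorProduct.map_injective_of_flat_flat _ _ Subtype.val_injective Subtype.val_injective

theorem hsp_of_rel {S : Subalgebra k A} (h : ∀ x ∈ S, ∃ y, HspRel S x y) :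
    IsHopfSubalgebra S := by
  obtain ⟨π, hπ⟩ := (TensorProduct.map S.val.toLinearMap
    S.val.toLinearMap).exists_leftInverse_of_injective (LinearMap.ker_eq_bot.mpr (hsp_inj S))
  have hπ' : ∀ t, π (TensorProduct.map S.val.toLinearMap S.val.toLinearMap t) = t :=
    fun t => LinearMap.congr_fun hπ t
  let G : Submodule k (S × S) :=
    { carrier := {p | HspRel S (p.1 : A) (p.2 : A)}
      add_mem' := fun {a b} ha hb => HspRel.add ha hb
      zero_mem' := HspRel.zero S
      smul_mem' := fun r a ha => HspRel.smul r ha }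
  let f : G →ₗ[k] S := LinearMap.fst k S S ∘ₗ G.subtype
  have hf : Function.Bijective f := by
    constructor
    · rw [← LinearMap.ker_eq_bot, LinearMap.ker_eq_bot']
      rintro ⟨⟨x, y⟩, hm⟩ h0
      have hx : x = 0 := h0
      subst hx
      have hy : y = 0 := Subtype.ext (HspRel.eq_zero hm)
      subst hy
      rfl
    · rintro ⟨x, hx⟩
      obtain ⟨y, hy⟩ := h x hx
      have hyS : y ∈ S := by
        obtain ⟨ι, _, _, a, c, μ, H, -, rfl⟩ := hy
        exact sum_mem fun i _ => sum_mem fun j _ => S.smul_mem (H.memC i j) _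
      exact ⟨⟨(⟨x, hx⟩, ⟨y, hyS⟩), hy⟩, rfl⟩
  let e := LinearEquiv.ofBijective f hf
  let σ : S →ₗ[k] S := LinearMap.snd k S S ∘ₗ G.subtype ∘ₗ e.symm.toLinearMap
  have hσ : ∀ x y : S, HspRel S (x : A) (y : A) → σ x = y := by
    intro x y hxy
    have : e.symm x = ⟨(x, y), hxy⟩ := by
      rw [LinearEquiv.symm_apply_eq]; rfl
    simp [σ, this]
  let D : S →ₗ[k] S ⊗[k] S := π ∘ₗ Coalgebra.comul ∘ₗ S.val.toLinearMap
  -- reduction to matrix entries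
  have hind : ∀ P : S → Prop, P 0 → (∀ x y, P x → P y → P (x + y)) →
      (∀ (r : k) x, P x → P (r • x)) →
      (∀ (ι : Type) (_ : Fintype ι) (_ : DecidableEq ι) (a c : Matrix ι ι S),
        HspMat S (fun i j => (a i j : A)) (fun i j => (c i j : A)) → ∀ i j, P (a i j)) →
      ∀ x, P x := by
    intro P h0 ha hs hm x
    obtain ⟨y, ι, _, _, a, c, μ, H, hx, -⟩ := h x x.2
    have hx' : x = ∑ i, ∑ j, μ i j • (⟨a i j, H.memA i j⟩ : S) := by
      apply Subtype.ext
      rw [hx]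
      simp
    rw [hx']
    refine Finset.sum_induction _ P ha h0 fun i _ => Finset.sum_induction _ P ha h0 fun j _ => ?_
    exact hs _ _ (hm ι _ _ (fun i j => ⟨a i j, H.memA i j⟩) (fun i j => ⟨c i j, H.memC i j⟩) H i j)
  have hD : ∀ (ι : Type) (_ : Fintype ι) (_ : DecidableEq ι) (a c : Matrix ι ι S),
        HspMat S (fun i j => (a i j : A)) (fun i j => (c i j : A)) → ∀ i j,
        D (a i j) = ∑ l, a i l ⊗ₜ[k] a l j := by
    intro ι _ _ a c H i j
    rw [← hπ' (∑ l, a i l ⊗ₜ[k] a l j)]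
    simp only [D, LinearMap.comp_apply]
    congr 1
    rw [map_sum]
    exact H.comul i j
  have hS : ∀ (ι : Type) (_ : Fintype ι) (_ : DecidableEq ι) (a c : Matrix ι ι S),
        HspMat S (fun i j => (a i j : A)) (fun i j => (c i j : A)) → ∀ i j,
        σ (a i j) = c i j := by
    intro ι _ _ a c H i j
    apply hσ
    refine ⟨ι, _, _, _, _, Matrix.single i j 1, H, ?_, ?_⟩ <;>
      simp [Matrix.single_apply, ite_and]
  have hone : ∀ (ι : Type) (_ : Fintype ι) (_ : DecidableEq ι) (a c : Matrix ι ι S),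
        HspMat S (fun i j => (a i j : A)) (fun i j => (c i j : A)) → a * c = 1 := by
    intro ι _ _ a c H
    ext i j
    have : ∑ l, (a i l : A) * (c l j : A) = (1 : Matrix ι ι A) i j :=
      congrFun (congrFun H.inv i) j
    rw [Matrix.mul_apply, AddSubmonoidClass.coe_finsetSum]
    refine this.trans ?_
    rw [Matrix.one_apply, Matrix.one_apply]
    split_ifs <;> simp
  have hcu : ∀ (ι : Type) (_ : Fintype ι) (_ : DecidableEq ι) (a c : Matrix ι ι S),
        HspMat S (fun i j => (a i j : A)) (fun i j => (c i j : A)) → ∀ i j,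
        algebraMap k S (Coalgebra.counit (R := k) (a i j : A)) = (1 : Matrix ι ι S) i j := by
    intro ι _ _ a c H i j
    rw [H.counit i j, Matrix.one_apply, Matrix.one_apply]
    split_ifs <;> simp
  refine ⟨D, σ, hind _ (by simp) ?_ ?_ ?_, hind _ (by simp) ?_ ?_ ?_, hind _ (by simp) ?_ ?_ ?_⟩
  · intro x y hx hy; simp only [map_add, hx, hy, Subalgebra.coe_add]
  · intro r x hx; simp only [map_smul, hx, Subalgebra.coe_smul]
  · intro ι _ _ a c H i j
    rw [hD ι _ _ a c H, map_sum]
    exact (H.comul i j).symm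
  · intro x y hx hy; simp only [map_add, hx, hy, Subalgebra.coe_add]
  · intro r x hx
    rw [map_smul, map_smul, map_smul, hx, Subalgebra.coe_smul, map_smul, smul_eq_mul, map_mul,
      Algebra.smul_def]
  · intro ι _ _ a c H i j
    rw [hD ι _ _ a c H, hcu ι _ _ a c H, ← mul_eq_one_comm.mp (hone ι _ _ a c H)]
    simp [hS ι _ _ a c H, Matrix.mul_apply]
  · intro x y hx hy; simp only [map_add, hx, hy, Subalgebra.coe_add]
  · intro r x hx
    rw [map_smul, map_smul, map_smul, hx, Subalgebra.coe_smul, map_smul, smul_eq_mul, map_mul,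
      Algebra.smul_def]
  · intro ι _ _ a c H i j
    rw [hD ι _ _ a c H, hcu ι _ _ a c H, ← hone ι _ _ a c H]
    simp [hS ι _ _ a c H, Matrix.mul_apply]

set_option synthInstance.maxHeartbeats 400000 in
set_option maxHeartbeats 2000000 in
theorem hsp_rel {S : Subalgebra k A} (h : IsHopfSubalgebra S) (x : A) (hx : x ∈ S) :
    ∃ y, HspRel S x y := by
  obtain ⟨D, σ, hD, -, hσ⟩ := h
  let v : S →ₗ[k] A := S.val.toLinearMap
  have hv : Function.Injective v := Subtype.val_injective
  have hDv : ∀ s, TensorProduct.map v v (D s) = Coalgebra.comul (R := k) (v s) := hD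
  let I : Coalgebra k S :=
    { comul := D
      counit := Coalgebra.counit ∘ₗ v
      coassoc := by
        ext s
        apply TensorProduct.map_injective_of_flat_flat v (TensorProduct.map v v) hv
          (hsp_inj S)
        have h1 : ∀ t : S ⊗[k] S, TensorProduct.map v (TensorProduct.map v v)
            (TensorProduct.assoc k S S S (D.rTensor S t)) =
            TensorProduct.assoc k A A A (Coalgebra.comul.rTensor A (TensorProduct.map v v t)) := by
          intro t
          induction t with
          | zero => simp
          | add a b ha hb => simp only [map_add, ha, hb]
          | tmul a b =>
            simp only [LinearMap.rTensor_tmul, TensorProduct.map_tmul, ← hDv]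
            generalize D a = u
            induction u with
            | zero => simp
            | add a b ha hb => simp only [map_add, ha, hb, TensorProduct.add_tmul]
            | tmul a b => simp
        have h2 : ∀ t : S ⊗[k] S, TensorProduct.map v (TensorProduct.map v v)
            (D.lTensor S t) =
            Coalgebra.comul.lTensor A (TensorProduct.map v v t) := by
          intro t
          induction t with
          | zero => simp
          | add a b ha hb => simp only [map_add, ha, hb]
          | tmul a b => simp [hDv]
        simp only [LinearMap.comp_apply, LinearEquiv.coe_coe]
        rw [h1, h2, hDv, Coalgebra.coassoc_apply]
      rTensor_counit_comp_comul := by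
        ext s
        apply (TensorProduct.lid k S).injective
        apply hv
        have h1 : ∀ t : S ⊗[k] S, v (TensorProduct.lid k S ((Coalgebra.counit ∘ₗ v).rTensor S t)) =
          TensorProduct.lid k A (Coalgebra.counit.rTensor A (TensorProduct.map v v t)) := by
          intro t
          induction t with
          | zero => simp
          | add a b ha hb => simp only [map_add, ha, hb]
          | tmul a b => simp
        simp only [LinearMap.comp_apply]
        rw [h1, hDv]
        simp
      lTensor_counit_comp_comul := by
        ext s
        apply (TensorProduct.rid k S).injective
        apply hv
        have h1 : ∀ t : S ⊗[k] S, v (TensorProduct.rid k S ((Coalgebra.counit ∘ₗ v).lTensor S t)) =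
          TensorProduct.rid k A (Coalgebra.counit.lTensor A (TensorProduct.map v v t)) := by
          intro t
          induction t with
          | zero => simp
          | add a b ha hb => simp only [map_add, ha, hb]
          | tmul a b => simp
        simp only [LinearMap.comp_apply]
        rw [h1, hDv]
        simp }
  obtain ⟨n, a, μ, h1, h2, h3⟩ := hsp_coeff (k := k) (⟨x, hx⟩ : S)
  have h1' : ∀ i j, D (a i j) = ∑ l, a i l ⊗ₜ[k] a l j := h1
  have h2' : ∀ i j, Coalgebra.counit (R := k) (a i j : A) = (1 : Matrix _ _ k) i j := h2
  refine ⟨_, Fin n, inferInstance, inferInstance, fun i j => (a i j : A),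
    fun i j => (σ (a i j) : A), μ, ⟨fun i j => (a i j).2, fun i j => (σ (a i j)).2, ?_, h2', ?_⟩,
    ?_, rfl⟩
  · intro i j
    rw [← hD, h1', map_sum]
    rfl
  · ext i j
    have := hσ (a i j)
    rw [h1', h2'] at this
    have h4 := congrArg (Subtype.val) this
    simp only [map_sum, TensorProduct.map_tmul, LinearMap.mul'_apply, LinearMap.id_apply,
      AddSubmonoidClass.coe_finsetSum, MulMemClass.coe_mul] at h4
    refine (Matrix.mul_apply (M := Matrix.of fun i j => (a i j : A))
      (N := Matrix.of fun i j => (σ (a i j) : A))).trans (h4.trans ?_)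
    rw [Matrix.one_apply, Matrix.one_apply]
    split_ifs <;> simp
  · have := congrArg (Subtype.val) h3
    simpa using this

theorem hsp_sup {S₁ S₂ : Subalgebra k A} (h₁ : IsHopfSubalgebra S₁) (h₂ : IsHopfSubalgebra S₂) :
    IsHopfSubalgebra (S₁ ⊔ S₂) := by
  apply hsp_of_rel
  intro x hx
  rw [← Subalgebra.mem_toSubmodule, ← Subalgebra.mul_toSubmodule] at hx
  induction hx using Submodule.mul_induction_on' with
  | mem_mul_mem m hm n hn =>
    obtain ⟨y, hy⟩ := hsp_rel h₁ m hm
    obtain ⟨z, hz⟩ := hsp_rel h₂ n hn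
    exact ⟨_, (hy.mono le_sup_left).mul (hz.mono le_sup_right)⟩
  | add x _ y _ hx hy =>
    obtain ⟨u, hu⟩ := hx
    obtain ⟨w, hw⟩ := hy
    exact ⟨_, hu.add hw⟩

end

/-- Over a field `k`, for a commutative `k`-bialgebra `A` and Hopf
subalgebras `S₁, S₂` of `A`, the `k`-linear span `S₁·S₂` of products (the image of the
multiplication map `S₁ ⊗ S₂ → A`) is a subalgebra of `A` and a Hopf subalgebra containing
`S₁` and `S₂`.  Consequently, the set of Hopf subalgebras of `A` is directed under
inclusion, and the union of all Hopf subalgebras of `A` is itself a Hopf subalgebra,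
the largest one. -/
theorem hopfSubalgebra_product {k A : Type*} [Field k] [CommRing A] [Bialgebra k A]
    (S₁ S₂ : Subalgebra k A)
    (h₁ : IsHopfSubalgebra S₁) (h₂ : IsHopfSubalgebra S₂) :
    (∃ T : Subalgebra k A,
        Subalgebra.toSubmodule T = Subalgebra.toSubmodule S₁ * Subalgebra.toSubmodule S₂ ∧
        IsHopfSubalgebra T ∧ S₁ ≤ T ∧ S₂ ≤ T) ∧
    DirectedOn (· ≤ ·) {S : Subalgebra k A | IsHopfSubalgebra S} ∧
    IsHopfSubalgebra (⨆ S : {S : Subalgebra k A // IsHopfSubalgebra S}, (S : Subalgebra k A)) ∧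
    (∀ S : Subalgebra k A, IsHopfSubalgebra S →
      S ≤ ⨆ S' : {S' : Subalgebra k A // IsHopfSubalgebra S'}, (S' : Subalgebra k A)) := by
  have hdir : Directed (· ≤ ·) (fun S : {S : Subalgebra k A // IsHopfSubalgebra S} =>
      (S : Subalgebra k A)) := fun S T =>
    ⟨⟨S.1 ⊔ T.1, hsp_sup S.2 T.2⟩, le_sup_left, le_sup_right⟩
  refine ⟨⟨S₁ ⊔ S₂, (Subalgebra.mul_toSubmodule S₁ S₂).symm, hsp_sup h₁ h₂, le_sup_left,
    le_sup_right⟩, fun S hS T hT => ⟨S ⊔ T, hsp_sup hS hT, le_sup_left, le_sup_right⟩, ?_, ?_⟩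
  · apply hsp_of_rel
    intro x hx
    have : Nonempty {S : Subalgebra k A // IsHopfSubalgebra S} := ⟨⟨S₁, h₁⟩⟩
    rw [← SetLike.mem_coe, Subalgebra.coe_iSup_of_directed hdir, Set.mem_iUnion] at hx
    obtain ⟨S, hS⟩ := hx
    obtain ⟨y, hy⟩ := hsp_rel S.2 x hS
    exact ⟨y, hy.mono (le_iSup (fun S : {S : Subalgebra k A // IsHopfSubalgebra S} =>
      (S : Subalgebra k A)) S)⟩
  · intro S hS
    exact le_iSup (fun S : {S : Subalgebra k A // IsHopfSubalgebra S} =>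
      (S : Subalgebra k A)) ⟨S, hS⟩
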